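/- arXiv:2108.09367 — 5 statements merged into one kernel-verified Lean document; each statement's English description precedes it below -/
import Mathlib

section
/- Let G be a finite simple bipartite graph and let t be a vertex of G. The UIF position (G, t) is an N-position (a win for the player to move) if and only if every maximum matching of G saturates t. -/
variable {V : Type*}

/-- A matching of `G`: a set of edges of `G`, no two of which share an endpoint. -/
def IsMatching (G : SimpleGraph V) (M : Set (Sym2 V)) : Prop :=
  M ⊆ G.edgeSet ∧ M.Pairwise fun e f => ∀ v : V, v ∈ e → v ∉ f

/-- A maximum matching of `G`: a matching of maximum cardinality among all matchings of `G`. -/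
def IsMaxMatching (G : SimpleGraph V) (M : Set (Sym2 V)) : Prop :=
  IsMatching G M ∧ ∀ N : Set (Sym2 V), IsMatching G N → N.ncard ≤ M.ncard

/-- `M` saturates the vertex `v`: `v` is an endpoint of some edge of `M`. -/
def Saturates (M : Set (Sym2 V)) (v : V) : Prop := ∃ e ∈ M, v ∈ e

/-- N-positions of undirected impartial Geography with free deletion (UIF), played on the
induced subgraph of `G` on the vertex set `A` with the token on `t`: a move consists of
choosing `w ∈ A` adjacent to the token vertex `t` and `u ∈ A` adjacent to `w` (possibly
`u = t`), moving the token to `w` and deleting `u`.  A position is an N-position iff some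
legal move leads to a position that is not an N-position. -/
def uifN [DecidableEq V] (G : SimpleGraph V) : Finset V → V → Prop
  | A, t =>
    ∃ w ∈ A, ∃ u, ∃ _ : u ∈ A, G.Adj t w ∧ G.Adj w u ∧ ¬ uifN G (A.erase u) w
  termination_by A _ => A.card
  decreasing_by exact Finset.card_erase_lt_of_mem ‹u ∈ A›

section helpers
variable [DecidableEq V]

/-- `Mt G A k`: the induced subgraph on `A` has a matching with `k` edges. -/
def Mt (G : SimpleGraph V) : ℕ → Finset V → Prop
  | 0, _ => True
  | k + 1, A => ∃ x ∈ A, ∃ y ∈ A, G.Adj x y ∧ Mt G k ((A.erase x).erase y)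

theorem Mt.mono {G : SimpleGraph V} {k : ℕ} : ∀ {A B : Finset V}, A ⊆ B → Mt G k A → Mt G k B := by
  induction k with
  | zero => intro A B _ _; trivial
  | succ k ih =>
    rintro A B h ⟨x, hx, y, hy, ha, hm⟩
    exact ⟨x, h hx, y, h hy, ha,
      ih (Finset.erase_subset_erase _ (Finset.erase_subset_erase _ h)) hm⟩

theorem Mt.add {G : SimpleGraph V} {k : ℕ} {A B : Finset V} {x y : V} (hx : x ∈ B) (hy : y ∈ B)
    (ha : G.Adj x y) (h : ∀ z ∈ A, z ∈ B ∧ z ≠ x ∧ z ≠ y) (hm : Mt G k A) : Mt G (k + 1) B := by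
  refine ⟨x, hx, y, hy, ha, hm.mono ?_⟩
  intro z hz
  have := h z hz
  simp [this.1, this.2.1, this.2.2]

theorem Mt.peel {G : SimpleGraph V} (t : V) {k : ℕ} : ∀ {A : Finset V}, Mt G (k + 1) A →
    Mt G (k + 1) (A.erase t) ∨ (t ∈ A ∧ ∃ y ∈ A, G.Adj t y ∧ Mt G k ((A.erase t).erase y)) := by
  induction k with
  | zero =>
    rintro A ⟨x, hx, y, hy, ha, hm⟩
    by_cases h1 : t = x
    · subst h1; exact Or.inr ⟨hx, y, hy, ha, trivial⟩
    by_cases h2 : t = y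
    · subst h2; exact Or.inr ⟨hy, x, hx, ha.symm, trivial⟩
    · exact Or.inl ⟨x, by grind, y, by grind, ha, trivial⟩
  | succ k ih =>
    rintro A ⟨x, hx, y, hy, ha, hm⟩
    by_cases h1 : t = x
    · subst h1; exact Or.inr ⟨hx, y, hy, ha, hm⟩
    by_cases h2 : t = y
    · subst h2
      exact Or.inr ⟨hy, x, hx, ha.symm, hm.mono (by grind)⟩
    rcases ih hm with h | ⟨ht, z, hz, haz, h⟩
    · exact Or.inl (Mt.add (x := x) (y := y) (by grind) (by grind) ha (by grind) h)
    · refine Or.inr ⟨by grind, z, by grind, haz, ?_⟩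
      exact Mt.add (x := x) (y := y) (by grind) (by grind) ha (by grind) h

theorem Mt.pred {G : SimpleGraph V} {k : ℕ} {A : Finset V} (h : Mt G (k + 1) A) : Mt G k A := by
  obtain ⟨x, hx, y, hy, ha, hm⟩ := h
  exact hm.mono (by grind)

theorem Mt.le {G : SimpleGraph V} {j k : ℕ} {A : Finset V} (hjk : j ≤ k) (h : Mt G k A) :
    Mt G j A := by
  induction hjk with
  | refl => exact h
  | step _ ih => exact ih h.pred

theorem Mt.erase {G : SimpleGraph V} {k : ℕ} {A : Finset V} (u : V) (h : Mt G (k + 1) A) :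
    Mt G k (A.erase u) := by
  rcases h.peel u with h | ⟨_, y, _, _, h⟩
  · exact h.pred
  · exact h.mono (by grind)

theorem Mt.card_le {G : SimpleGraph V} {k : ℕ} : ∀ {A : Finset V}, Mt G k A → k ≤ A.card := by
  induction k with
  | zero => intro A _; exact Nat.zero_le _
  | succ k ih =>
    rintro A ⟨x, hx, y, hy, ha, hm⟩
    have h1 := ih hm
    have h2 : ((A.erase x).erase y).card ≤ (A.erase x).card := Finset.card_erase_le
    have h3 := Finset.card_erase_lt_of_mem hx
    omega

/-- In a bipartite graph, if vertices `t`, `w` on opposite sides are each missed by a maximum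
matching, some maximum matching misses both. -/
theorem Mt.both {G : SimpleGraph V} (c : G.Coloring (Fin 2)) {k : ℕ} :
    ∀ {A : Finset V} {t w : V}, c t ≠ c w → Mt G k (A.erase t) → Mt G k (A.erase w) →
      ¬ Mt G (k + 1) A → Mt G k ((A.erase t).erase w) := by
  induction k with
  | zero => intros; trivial
  | succ k ih =>
    intro A t w hc ht hw hmax
    rcases hw.peel t with h | ⟨htA, y, hy, hty, h⟩
    · exact h.mono (by grind)
    have hmax' : ¬ Mt G (k + 1) ((A.erase t).erase y) := fun h' =>
      hmax ⟨t, by grind, y, by grind, hty, h'⟩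
    rcases ht.peel y with h' | ⟨hyA, x, hx, hyx, h'⟩
    · exact absurd h' hmax'
    have hcx : c x ≠ c w := by
      have h1 := c.valid hty
      have h2 := c.valid hyx
      omega
    have := ih (A := (A.erase t).erase y) (t := x) (w := w) hcx h' (h.mono (by grind)) hmax'
    have hxw : x ≠ w := by rintro rfl; exact hcx rfl
    exact Mt.add (x := x) (y := y) (by grind) (by grind) hyx.symm (by grind) this

theorem uifN_iff {G : SimpleGraph V} (c : G.Coloring (Fin 2)) (n : ℕ) :
    ∀ (A : Finset V) (t : V), A.card = n → t ∈ A →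
      (uifN G A t ↔ ∀ k, Mt G k (A.erase t) → Mt G (k + 1) A) := by
  induction n using Nat.strong_induction_on with
  | _ n ih =>
  intro A t hn htA
  rw [uifN]
  have key : ∀ u ∈ A, ∀ w ∈ A, G.Adj w u → (uifN G (A.erase u) w ↔
      ∀ k, Mt G k ((A.erase u).erase w) → Mt G (k + 1) (A.erase u)) := by
    intro u hu w hw ha
    have hne := ha.ne
    exact ih _ (hn ▸ Finset.card_erase_lt_of_mem hu) _ _ rfl (by grind)
  constructor
  · rintro ⟨w, hw, u, hu, htw, hwu, hN⟩
    rw [key u hu w hw hwu] at hN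
    push Not at hN
    obtain ⟨k, hk, hk'⟩ := hN
    intro j hj
    by_contra hcon
    have hne1 := htw.ne
    have hne2 := hwu.ne
    by_cases hut : u = t
    · subst hut
      have h1 : Mt G (k + 1) A := ⟨u, hu, w, hw, htw, hk⟩
      have h2 : j ≤ k := by
        by_contra h
        exact hk' (hj.le (by omega))
      exact hcon (h1.le (by omega))
    have hctw := c.valid htw
    by_cases hA : Mt G (k + 1) A
    · have hjk : k + 1 ≤ j := by
        by_contra h
        exact hcon (hA.le (by omega))
      have h1 : Mt G k ((A.erase t).erase u) := (hj.le hjk).erase u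
      have h2 := Mt.both c (A := A.erase u) hctw (h1.mono (by grind)) hk hk'
      exact hk' ⟨t, by grind, w, by grind, htw, h2⟩
    · have hAk : Mt G k A := hk.mono (by grind)
      have hjk : k ≤ j := by
        by_contra h
        exact hcon (hAk.le (by omega))
      have h2 := Mt.both c (A := A) hctw (hj.le hjk) (hk.mono (by grind)) hA
      exact hA ⟨t, by grind, w, by grind, htw, h2⟩
  · intro hE
    have hex : ∃ k, ¬ Mt G (k + 1) A := ⟨A.card, fun h => by have := h.card_le; omega⟩
    classical
    obtain ⟨k, hk1, hk2⟩ : ∃ k, ¬ Mt G (k + 1) A ∧ ∀ m < k, Mt G (m + 1) A :=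
      ⟨Nat.find hex, Nat.find_spec hex, fun m hm => not_not.1 (Nat.find_min hex hm)⟩
    cases k with
    | zero => exact absurd (hE 0 trivial) hk1
    | succ j =>
      have hj := hk2 j (by omega)
      rcases hj.peel t with h | ⟨_, w, hw, htw, h⟩
      · exact absurd (hE _ h) hk1
      · refine ⟨w, hw, t, htA, htw, htw.symm, ?_⟩
        rw [key t htA w hw htw.symm]
        intro hE'
        exact hk1 (hE _ (hE' _ h))

theorem Mt_of_matching [Fintype V] {G : SimpleGraph V} {k : ℕ} : ∀ {A : Finset V} {M : Set (Sym2 V)},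
    IsMatching G M → (∀ e ∈ M, ∀ v ∈ e, v ∈ A) → M.ncard = k → Mt G k A := by
  induction k with
  | zero => intros; trivial
  | succ k ih =>
    intro A M hM hA hk
    have hne : M.Nonempty := by
      rw [← Set.ncard_pos (Set.toFinite M)]; omega
    obtain ⟨e, he⟩ := hne
    induction e using Sym2.ind with
    | _ x y =>
    have hxy : G.Adj x y := hM.1 he
    refine ⟨x, hA _ he x (by simp), y, hA _ he y (by simp), hxy, ?_⟩
    refine ih (M := M \ {s(x, y)}) ⟨Set.diff_subset.trans hM.1, hM.2.mono Set.diff_subset⟩ ?_ ?_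
    · intro f hf v hv
      have h1 := hM.2 he hf.1 (fun h => hf.2 h.symm)
      have hx := h1 x (by simp)
      have hy := h1 y (by simp)
      have := hA f hf.1 v hv
      simp only [Finset.mem_erase]
      exact ⟨fun h => hy (h ▸ hv), fun h => hx (h ▸ hv), this⟩
    · rw [Set.ncard_diff_singleton_of_mem he]; omega

theorem matching_of_Mt [Fintype V] {G : SimpleGraph V} {k : ℕ} : ∀ {A : Finset V}, Mt G k A →
    ∃ M : Set (Sym2 V), IsMatching G M ∧ (∀ e ∈ M, ∀ v ∈ e, v ∈ A) ∧ M.ncard = k := by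
  induction k with
  | zero => intro A _; exact ⟨∅, ⟨by simp, by simp⟩, by simp, by simp⟩
  | succ k ih =>
    rintro A ⟨x, hx, y, hy, ha, hm⟩
    obtain ⟨M, hM, hA, hk⟩ := ih hm
    have hdis : ∀ f ∈ M, ∀ v ∈ f, v ≠ x ∧ v ≠ y ∧ v ∈ A := by
      intro f hf v hv
      have := hA f hf v hv
      simp only [Finset.mem_erase] at this
      tauto
    refine ⟨insert s(x, y) M, ⟨?_, ?_⟩, ?_, ?_⟩
    · exact Set.insert_subset ha hM.1
    · intro e he f hf hne v hve hvf
      rcases he with rfl | he <;> rcases hf with rfl | hf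
      · exact hne rfl
      · have := hdis f hf v hvf
        rcases Sym2.mem_iff.1 hve with h | h <;> tauto
      · have := hdis e he v hve
        rcases Sym2.mem_iff.1 hvf with h | h <;> tauto
      · exact hM.2 he hf hne v hve hvf
    · intro e he v hv
      rcases he with rfl | he
      · rcases Sym2.mem_iff.1 hv with rfl | rfl <;> assumption
      · exact (hdis e he v hv).2.2
    · rw [Set.ncard_insert_of_notMem, hk]
      intro h
      exact (hdis _ h x (by simp)).1 rfl

end helpers

/-- On a finite bipartite graph, the UIF position `(G, t)` is an N-position if and only if
every maximum matching of `G` saturates `t`. -/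
theorem uif_N_iff_saturated_by_every_maxMatching
    {V : Type*} [Fintype V] [DecidableEq V] (G : SimpleGraph V) (hG : G.Colorable 2) (t : V) :
    uifN G Finset.univ t ↔ ∀ M : Set (Sym2 V), IsMaxMatching G M → Saturates M t := by
  obtain ⟨c⟩ := hG
  rw [uifN_iff c _ Finset.univ t rfl (Finset.mem_univ t)]
  constructor
  · intro hE M hM
    by_contra hs
    have h1 : Mt G M.ncard (Finset.univ.erase t) := Mt_of_matching hM.1 (by
      intro e he v hv
      simp only [Finset.mem_erase, Finset.mem_univ, and_true]
      rintro rfl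
      exact hs ⟨e, he, hv⟩) rfl
    obtain ⟨N, hN, _, hc⟩ := matching_of_Mt (hE _ h1)
    have := hM.2 N hN
    omega
  · intro h k hk
    by_contra hcon
    obtain ⟨M, hM, hA, hc⟩ := matching_of_Mt hk
    have hmax : IsMaxMatching G M := by
      refine ⟨hM, fun N hN => ?_⟩
      by_contra hlt
      have h2 : Mt G N.ncard Finset.univ :=
        Mt_of_matching hN (fun _ _ _ _ => Finset.mem_univ _) rfl
      exact hcon (h2.le (by omega))
    obtain ⟨e, he, hv⟩ := h M hmax
    have := hA e he t hv
    simp at this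
end

section
/- Let G be a finite simple bipartite graph and let t be a vertex of G. The UIF position (G, t) is an N-position if and only if the UIR position (G, t) is an N-position; that is, on bipartite graphs the games UIF and UIR have exactly the same N-positions. -/
variable {V : Type*}

/-- N-positions of undirected impartial Geography with restricted deletion (UIR), played on
the induced subgraph of `G` on the vertex set `A` with the token on `t`: a move consists of
choosing `w ∈ A` adjacent to the token vertex `t`, moving the token to `w` and deleting `t`.
A position is an N-position iff some legal move leads to a position that is not an
N-position. -/
def uirN [DecidableEq V] (G : SimpleGraph V) : Finset V → V → Prop
  | A, t =>
    ∃ _ : t ∈ A, ∃ w ∈ A, G.Adj t w ∧ ¬ uirN G (A.erase t) w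
  termination_by A _ => A.card
  decreasing_by exact Finset.card_erase_lt_of_mem ‹t ∈ A›

namespace UIFProof

/-- `C` is a vertex cover of the subgraph induced on `A`. -/
def Cov {V : Type*} (G : SimpleGraph V) (A C : Finset V) : Prop :=
  ∀ a ∈ A, ∀ b ∈ A, G.Adj a b → a ∈ C ∨ b ∈ C

/-- Vertex cover number. -/
noncomputable def tau {V : Type*} (G : SimpleGraph V) (A : Finset V) : ℕ :=
  sInf {n | ∃ C : Finset V, Cov G A C ∧ C.card = n}

lemma tau_spec {V : Type*} (G : SimpleGraph V) (A : Finset V) :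
    ∃ C : Finset V, Cov G A C ∧ C.card = tau G A :=
  Nat.sInf_mem (s := {n | ∃ C : Finset V, Cov G A C ∧ C.card = n})
    ⟨A.card, A, fun _ ha _ _ _ => Or.inl ha, rfl⟩

lemma tau_le {V : Type*} {G : SimpleGraph V} {A C : Finset V} (h : Cov G A C) :
    tau G A ≤ C.card := Nat.sInf_le ⟨C, h, rfl⟩

variable {V : Type*} [DecidableEq V] {G : SimpleGraph V}

lemma cov_erase {A C : Finset V} (h : Cov G A C) (v : V) :
    Cov G (A.erase v) (C.erase v) := by
  intro a ha b hb hab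
  simp only [Finset.mem_erase] at *
  rcases h a ha.2 b hb.2 hab with h | h
  · exact Or.inl ⟨ha.1, h⟩
  · exact Or.inr ⟨hb.1, h⟩

lemma tau_erase_lt {A C : Finset V} (h : Cov G A C) {v : V} (hv : v ∈ C) :
    tau G (A.erase v) < C.card :=
  (tau_le (cov_erase h v)).trans_lt (Finset.card_erase_lt_of_mem hv)

lemma tau_mono {A B : Finset V} (h : A ⊆ B) : tau G A ≤ tau G B := by
  obtain ⟨C, hC, e⟩ := tau_spec G B
  rw [← e]
  exact tau_le fun a ha b hb => hC a (h ha) b (h hb)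

lemma tau_le_erase (A : Finset V) (v : V) : tau G A ≤ tau G (A.erase v) + 1 := by
  obtain ⟨C, hC, e⟩ := tau_spec G (A.erase v)
  rw [← e]
  refine (tau_le (C := insert v C) ?_).trans (Finset.card_insert_le _ _)
  intro a ha b hb hab
  by_cases h1 : a = v
  · simp [h1]
  by_cases h2 : b = v
  · simp [h2]
  rcases hC a (by simp [*]) b (by simp [*]) hab with h | h <;> simp [h]

lemma move_bad {A : Finset V} {t w u : V} (ht : t ∈ A) (hw : w ∈ A)
    (htw : G.Adj t w) (hwu : G.Adj w u) (h : ¬ tau G (A.erase t) < tau G A) :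
    tau G ((A.erase u).erase w) < tau G (A.erase u) := by
  have h3 : tau G ((A.erase u).erase w) ≤ tau G (A.erase w) :=
    tau_mono (Finset.erase_subset_erase _ (Finset.erase_subset _ _))
  have hwlt : tau G (A.erase w) < tau G A := by
    obtain ⟨C, hC, e⟩ := tau_spec G A
    rcases hC _ ht _ hw htw with h1 | h1
    · exact absurd (e ▸ tau_erase_lt hC h1) h
    · exact e ▸ tau_erase_lt hC h1
  by_cases hut : u = t
  · subst hut
    omega
  · obtain ⟨D, hD, e⟩ := tau_spec G (A.erase u)
    rcases hD t (by simp [ht, Ne.symm hut]) w (by simp [hw, hwu.ne]) htw with h1 | h1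
    · have h2 := tau_erase_lt hD h1
      rw [Finset.erase_right_comm] at h2
      have h3 := tau_le_erase (G := G) (A.erase t) u
      omega
    · exact e ▸ tau_erase_lt hD h1

lemma join (c : V → Fin 2) (hc : ∀ a b, G.Adj a b → c a ≠ c b) (i : Fin 2)
    {B C D : Finset V} (hC : Cov G B C) (hD : Cov G B D)
    (eC : C.card ≤ tau G B) (eD : D.card ≤ tau G B) :
    ∃ J, Cov G B J ∧ J.card ≤ tau G B ∧
      ∀ v, c v = i → v ∈ C ∨ v ∈ D → v ∈ J := by
  let J (p : V → Prop) [DecidablePred p] : Finset V :=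
    (C ∪ D).filter p ∪ (C ∩ D).filter (fun v => ¬ p v)
  have cov : ∀ j, Cov G B (J (fun v => c v = j)) := by
    intro j a ha b hb hab
    have h1 := hC a ha b hb hab
    have h2 := hD a ha b hb hab
    have h3 := hc a b hab
    have h4 : c a = j ∨ c b = j := by omega
    simp only [J, Finset.mem_union, Finset.mem_filter, Finset.mem_inter]
    grind
  have card : ∀ j, (J (fun v => c v = j)).card =
      ((C ∪ D).filter (fun v => c v = j)).card +
        ((C ∩ D).filter (fun v => ¬ c v = j)).card := by
    intro j
    apply Finset.card_union_of_disjoint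
    rw [Finset.disjoint_left]
    intro a h1 h2
    simp only [Finset.mem_filter] at h1 h2
    exact h2.2 h1.2
  refine ⟨J (fun v => c v = i), cov i, ?_, ?_⟩
  · have k1 := tau_le (cov (i + 1))
    have k2 := card i
    have k3 := card (i + 1)
    have e : ∀ v, (c v = i + 1) ↔ ¬ c v = i := by intro v; omega
    simp only [e, not_not] at k3 k1
    have k4 := Finset.card_filter_add_card_filter_not (s := C ∪ D) (fun v => c v = i)
    have k5 := Finset.card_filter_add_card_filter_not (s := C ∩ D) (fun v => c v = i)
    have k6 := Finset.card_union_add_card_inter C D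
    omega
  · intro v hv h
    simp [J, hv, h]

lemma good_move (hG : G.Colorable 2) {A : Finset V} {t : V}
    (h : tau G (A.erase t) < tau G A) :
    ∃ w ∈ A, G.Adj t w ∧ ¬ tau G ((A.erase t).erase w) < tau G (A.erase t) := by
  classical
  obtain ⟨c⟩ := hG
  by_contra! hcon
  have key : ∀ S : Finset V, (∀ w ∈ S, w ∈ A ∧ G.Adj t w) →
      ∃ C, Cov G (A.erase t) C ∧ C.card ≤ tau G (A.erase t) ∧ S ⊆ C := by
    intro S
    induction S using Finset.induction_on with
    | empty =>
      intro _
      obtain ⟨C, hC, e⟩ := tau_spec G (A.erase t)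
      exact ⟨C, hC, e.le, by simp⟩
    | insert w S _ ih =>
      intro hS
      obtain ⟨C, hC, e, hSC⟩ := ih fun v hv => hS v (Finset.mem_insert_of_mem hv)
      obtain ⟨hwA, hw⟩ := hS w (Finset.mem_insert_self _ _)
      have h1 := hcon w hwA hw
      obtain ⟨D, hD, eD⟩ := tau_spec G ((A.erase t).erase w)
      have hD' : Cov G (A.erase t) (insert w D) := by
        intro a ha b hb hab
        by_cases h1 : a = w
        · simp [h1]
        by_cases h2 : b = w
        · simp [h2]
        rcases hD a (Finset.mem_erase.2 ⟨h1, ha⟩) b (Finset.mem_erase.2 ⟨h2, hb⟩) hab with h | h <;>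
          simp [h]
      have eD' := Finset.card_insert_le w D
      obtain ⟨J, hJ, eJ, hJJ⟩ := join c (fun a b hab => c.valid hab) (c w) hC hD' e (by omega)
      refine ⟨J, hJ, eJ, ?_⟩
      intro v hv
      have hcv : c v = c w := by
        have a1 := c.valid (hS v hv).2
        have a2 := c.valid hw
        omega
      apply hJJ v hcv
      rcases Finset.mem_insert.1 hv with h | h
      · right; simp [h]
      · left; exact hSC h
  obtain ⟨C, hC, e, hS⟩ := key (A.filter (G.Adj t)) (by simp)
  have : Cov G A C := by
    intro a ha b hb hab
    by_cases h1 : a = t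
    · subst h1; right; exact hS (by simp [hb, hab])
    by_cases h2 : b = t
    · subst h2; left; exact hS (by simp [ha, hab.symm])
    exact hC a (by simp [*]) b (by simp [*]) hab
  have := tau_le this
  omega

lemma uif_iff (hG : G.Colorable 2) : ∀ n, ∀ A : Finset V, A.card = n → ∀ t ∈ A,
    (uifN G A t ↔ tau G (A.erase t) < tau G A) := by
  intro n
  induction n using Nat.strong_induction_on with
  | _ n ih =>
    intro A hA t ht
    have step : ∀ u ∈ A, ∀ w ∈ A, G.Adj w u →
        (uifN G (A.erase u) w ↔ tau G ((A.erase u).erase w) < tau G (A.erase u)) :=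
      fun u hu w hw hwu => ih _ (hA ▸ Finset.card_erase_lt_of_mem hu) _ rfl w
        (Finset.mem_erase.2 ⟨hwu.ne, hw⟩)
    rw [uifN]
    constructor
    · rintro ⟨w, hw, u, hu, htw, hwu, h⟩
      rw [step u hu w hw hwu] at h
      by_contra hc
      exact h (move_bad ht hw htw hwu hc)
    · intro h
      obtain ⟨w, hw, htw, h'⟩ := good_move hG h
      exact ⟨w, hw, t, ht, htw, htw.symm, by rwa [step t ht w hw htw.symm]⟩

lemma uir_iff (hG : G.Colorable 2) : ∀ n, ∀ A : Finset V, A.card = n → ∀ t ∈ A,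
    (uirN G A t ↔ tau G (A.erase t) < tau G A) := by
  intro n
  induction n using Nat.strong_induction_on with
  | _ n ih =>
    intro A hA t ht
    have step : ∀ w ∈ A, G.Adj t w →
        (uirN G (A.erase t) w ↔ tau G ((A.erase t).erase w) < tau G (A.erase t)) :=
      fun w hw htw => ih _ (hA ▸ Finset.card_erase_lt_of_mem ht) _ rfl w
        (Finset.mem_erase.2 ⟨htw.ne', hw⟩)
    rw [uirN]
    constructor
    · rintro ⟨_, w, hw, htw, h⟩
      rw [step w hw htw] at h
      by_contra hc
      exact h (move_bad ht hw htw htw.symm hc)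
    · intro h
      obtain ⟨w, hw, htw, h'⟩ := good_move hG h
      exact ⟨ht, w, hw, htw, by rwa [step w hw htw]⟩

end UIFProof

/-- On finite bipartite graphs, the games UIF and UIR have exactly the same N-positions. -/
theorem uif_N_iff_uir_N_of_bipartite
    {V : Type*} [Fintype V] [DecidableEq V] (G : SimpleGraph V) (hG : G.Colorable 2) (t : V) :
    uifN G Finset.univ t ↔ uirN G Finset.univ t := by
  rw [UIFProof.uif_iff hG _ _ rfl t (Finset.mem_univ t),
    UIFProof.uir_iff hG _ _ rfl t (Finset.mem_univ t)]
end

section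
/- Let G be a finite simple graph, let M1 and M2 be maximum matchings of G, and let S be a set of vertices of G such that every edge of M1 ∪ M2 has both endpoints in S or both endpoints outside S. Then the matching M consisting of the edges of M1 with both endpoints in S together with the edges of M2 with both endpoints outside S is a maximum matching of G (in particular, it has the same cardinality as M2). -/
variable {V : Type*}

/-- Gluing two matchings along a vertex set gives a matching. -/
theorem isMatching_glue_aux {V : Type*} (G : SimpleGraph V) (A B : Set (Sym2 V))
    (hA : IsMatching G A) (hB : IsMatching G B) (S : Set V) :
    IsMatching G ({e ∈ A | ∀ v ∈ e, v ∈ S} ∪ {e ∈ B | ∀ v ∈ e, v ∉ S}) := by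
  refine ⟨?_, ?_⟩
  · rintro e (he | he)
    · exact hA.1 he.1
    · exact hB.1 he.1
  · rintro e (he | he) f (hf | hf) hne v hv hv'
    · exact hA.2 he.1 hf.1 hne v hv hv'
    · exact hf.2 v hv' (he.2 v hv)
    · exact he.2 v hv (hf.2 v hv')
    · exact hB.2 he.1 hf.1 hne v hv hv'

/-- The two parts of a glued set are disjoint. -/
theorem ncard_glue_aux {V : Type*} [Fintype V] (A B : Set (Sym2 V)) (S : Set V) :
    ({e ∈ A | ∀ v ∈ e, v ∈ S} ∪ {e ∈ B | ∀ v ∈ e, v ∉ S}).ncard =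
      {e ∈ A | ∀ v ∈ e, v ∈ S}.ncard + {e ∈ B | ∀ v ∈ e, v ∉ S}.ncard := by
  refine Set.ncard_union_eq ?_ (Set.toFinite _) (Set.toFinite _)
  rw [Set.disjoint_left]
  intro e he hf
  exact hf.2 _ e.out_fst_mem (he.2 _ e.out_fst_mem)

/-- A set of edges not crossing `S` is the glueing of itself with itself. -/
theorem self_glue_aux {V : Type*} (A : Set (Sym2 V)) (S : Set V)
    (hS : ∀ e ∈ A, (∀ v ∈ e, v ∈ S) ∨ (∀ v ∈ e, v ∉ S)) :
    {e ∈ A | ∀ v ∈ e, v ∈ S} ∪ {e ∈ A | ∀ v ∈ e, v ∉ S} = A := by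
  ext e
  constructor
  · rintro (he | he) <;> exact he.1
  · intro he
    exact (hS e he).imp (fun h => ⟨he, h⟩) (fun h => ⟨he, h⟩)

/-- If `M1` and `M2` are maximum matchings of `G` and `S` is a set of vertices such that
every edge of `M1 ∪ M2` has both endpoints in `S` or both endpoints outside `S`, then the
edges of `M1` with both endpoints in `S` together with the edges of `M2` with both endpoints
outside `S` form a maximum matching of `G`, of the same cardinality as `M2`. -/
theorem isMaxMatching_glue
    {V : Type*} [Fintype V] (G : SimpleGraph V) (M1 M2 : Set (Sym2 V))
    (h1 : IsMaxMatching G M1) (h2 : IsMaxMatching G M2) (S : Set V)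
    (hS : ∀ e ∈ M1 ∪ M2, (∀ v ∈ e, v ∈ S) ∨ (∀ v ∈ e, v ∉ S)) :
    IsMaxMatching G ({e ∈ M1 | ∀ v ∈ e, v ∈ S} ∪ {e ∈ M2 | ∀ v ∈ e, v ∉ S}) ∧
      ({e ∈ M1 | ∀ v ∈ e, v ∈ S} ∪ {e ∈ M2 | ∀ v ∈ e, v ∉ S}).ncard = M2.ncard := by
  have m12 := isMatching_glue_aux G M1 M2 h1.1 h2.1 S
  have m21 := isMatching_glue_aux G M2 M1 h2.1 h1.1 S
  have c12 := ncard_glue_aux M1 M2 S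
  have c21 := ncard_glue_aux M2 M1 S
  have c11 := ncard_glue_aux M1 M1 S
  have c22 := ncard_glue_aux M2 M2 S
  rw [self_glue_aux M1 S fun e he => hS e (Or.inl he)] at c11
  rw [self_glue_aux M2 S fun e he => hS e (Or.inr he)] at c22
  have l1 := h1.2 _ m21
  have l2 := h2.2 _ m12
  have l3 := h1.2 _ h2.1
  have l4 := h2.2 _ h1.1
  have key : ({e ∈ M1 | ∀ v ∈ e, v ∈ S} ∪ {e ∈ M2 | ∀ v ∈ e, v ∉ S}).ncard = M2.ncard := by
    omega
  exact ⟨⟨m12, fun N hN => key ▸ h2.2 N hN⟩, key⟩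
end

section
/- Let G be a finite simple bipartite graph, let v be a vertex of G that is not saturated by some maximum matching of G, let w be a vertex adjacent to v, and suppose the edge uw belongs to some maximum matching of G. Then there exists a maximum matching of G that does not saturate u. -/
variable {V : Type*}

theorem isMatching_insert {V : Type*} {G : SimpleGraph V} {M : Set (Sym2 V)} {p q : V}
    (hM : IsMatching G M) (h : G.Adj p q) (hp : ¬ Saturates M p) (hq : ¬ Saturates M q) :
    IsMatching G (insert s(p, q) M) := by
  refine ⟨Set.insert_subset h hM.1, ?_⟩
  rintro e (rfl | he) f (rfl | hf) hef x hx hx'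
  · exact hef rfl
  · rcases Sym2.mem_iff.1 hx with rfl | rfl
    · exact hp ⟨f, hf, hx'⟩
    · exact hq ⟨f, hf, hx'⟩
  · rcases Sym2.mem_iff.1 hx' with rfl | rfl
    · exact hp ⟨e, he, hx⟩
    · exact hq ⟨e, he, hx⟩
  · exact hM.2 he hf hef x hx hx'

theorem ncard_insert_edge {V : Type*} [Fintype V] {M : Set (Sym2 V)} {p q : V}
    (hp : ¬ Saturates M p) : (insert s(p, q) M).ncard = M.ncard + 1 :=
  Set.ncard_insert_of_notMem (fun h => hp ⟨_, h, Sym2.mem_mk_left p q⟩) (Set.toFinite _)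

theorem isMatching_diff {V : Type*} {G : SimpleGraph V} {M : Set (Sym2 V)} {e : Sym2 V}
    (hM : IsMatching G M) : IsMatching G (M \ {e}) :=
  ⟨Set.diff_subset.trans hM.1, hM.2.mono Set.diff_subset⟩

theorem not_saturates_diff {V : Type*} {G : SimpleGraph V} {M : Set (Sym2 V)} {e : Sym2 V}
    (hM : IsMatching G M) (he : e ∈ M) {x : V} (hx : x ∈ e) : ¬ Saturates (M \ {e}) x := by
  rintro ⟨f, hf, hxf⟩
  exact hM.2 he hf.1 (fun h => hf.2 h.symm) x hx hxf

theorem not_saturates_insert {V : Type*} {M : Set (Sym2 V)} {p q x : V}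
    (h : ¬ Saturates M x) (h1 : x ≠ p) (h2 : x ≠ q) : ¬ Saturates (insert s(p, q) M) x := by
  rintro ⟨f, rfl | hf, hxf⟩
  · rcases Sym2.mem_iff.1 hxf with h | h
    · exact h1 h
    · exact h2 h
  · exact h ⟨f, hf, hxf⟩

theorem not_saturates_mono {V : Type*} {M N : Set (Sym2 V)} {x : V} (hMN : M ⊆ N)
    (h : ¬ Saturates N x) : ¬ Saturates M x := fun ⟨f, hf, hx⟩ => h ⟨f, hMN hf, hx⟩

theorem saturates_edge {V : Type*} {M : Set (Sym2 V)} {x : V} (h : Saturates M x) :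
    ∃ y, s(x, y) ∈ M := by
  obtain ⟨e, he, hx⟩ := h
  obtain ⟨y, rfl⟩ := Sym2.mem_iff_exists.1 hx
  exact ⟨y, he⟩

/-- The graph obtained by deleting all edges at `p` and `q`. -/
def delTwo {V : Type*} (G : SimpleGraph V) (p q : V) : SimpleGraph V where
  Adj x y := G.Adj x y ∧ (x ≠ p ∧ x ≠ q) ∧ (y ≠ p ∧ y ≠ q)
  symm := ⟨fun _ _ h => ⟨h.1.symm, h.2.2, h.2.1⟩⟩
  loopless := ⟨fun _ h => h.1.ne rfl⟩

theorem isMatching_delTwo {V : Type*} {G : SimpleGraph V} {p q : V} {M : Set (Sym2 V)} :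
    IsMatching (delTwo G p q) M ↔ IsMatching G M ∧ ¬ Saturates M p ∧ ¬ Saturates M q := by
  constructor
  · intro h
    refine ⟨⟨fun e he => ?_, h.2⟩, fun hs => ?_, fun hs => ?_⟩
    · induction e with | _ x y => exact (h.1 he : (delTwo G p q).Adj x y).1
    · obtain ⟨y, hy⟩ := saturates_edge hs
      exact (h.1 hy : (delTwo G p q).Adj p y).2.1.1 rfl
    · obtain ⟨y, hy⟩ := saturates_edge hs
      exact (h.1 hy : (delTwo G p q).Adj q y).2.1.2 rfl
  · rintro ⟨h, hp, hq⟩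
    refine ⟨fun e he => ?_, h.2⟩
    induction e with
    | _ x y =>
      have hx := Sym2.mem_mk_left x y
      have hy := Sym2.mem_mk_right x y
      refine (⟨h.1 he, ⟨?_, ?_⟩, ⟨?_, ?_⟩⟩ : (delTwo G p q).Adj x y)
      · rintro rfl; exact hp ⟨_, he, hx⟩
      · rintro rfl; exact hq ⟨_, he, hx⟩
      · rintro rfl; exact hp ⟨_, he, hy⟩
      · rintro rfl; exact hq ⟨_, he, hy⟩

theorem exchange_aux {V : Type*} [Fintype V] (c : V → Fin 2) (u w : V) (n : ℕ) :
    ∀ (G : SimpleGraph V) (_ : ∀ x y, G.Adj x y → c x ≠ c y) (v : V) (_ : c v = c u)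
      (M1 M2 : Set (Sym2 V)) (_ : IsMaxMatching G M1) (_ : ¬ Saturates M1 v)
      (_ : IsMaxMatching G M2) (_ : s(u, w) ∈ M2) (_ : M2.ncard = n),
      (∃ M, IsMaxMatching G M ∧ ¬ Saturates M u) ∨
      (∃ M, IsMaxMatching G M ∧ ¬ Saturates M v ∧ s(u, w) ∈ M) := by
  induction n with
  | zero =>
    intro G _ v _ M1 M2 _ _ _ h2 hn
    rw [Set.ncard_eq_zero (Set.toFinite _)] at hn
    simp [hn] at h2
  | succ n ih =>
    intro G hc v hvu M1 M2 h1 h1v h2 huw hn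
    by_cases h2v : Saturates M2 v
    swap
    · exact Or.inr ⟨M2, h2, h2v, huw⟩
    by_cases huv : u = v
    · subst huv; exact Or.inl ⟨M1, h1, h1v⟩
    obtain ⟨a, ha⟩ := saturates_edge h2v
    have hva : G.Adj v a := h2.1.1 ha
    have huwA : G.Adj u w := h2.1.1 huw
    have hvw : v ≠ w := by
      rintro rfl; exact hc _ _ huwA hvu.symm
    have hne : s(u, w) ≠ s(v, a) := by
      intro h
      rcases Sym2.eq_iff.1 h with h | h
      · exact huv h.1
      · exact hvw h.2.symm
    have hcard : M1.ncard = M2.ncard := le_antisymm (h2.2 _ h1.1) (h1.2 _ h2.1)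
    have hua : u ≠ a := by
      rintro rfl; exact hc _ _ hva hvu
    have h1a : Saturates M1 a := by
      by_contra h
      have := h1.2 _ (isMatching_insert h1.1 hva h1v h)
      rw [ncard_insert_edge h1v] at this
      omega
    obtain ⟨b, hb⟩ := saturates_edge h1a
    have hab : G.Adj a b := h1.1.1 hb
    have hbv : b ≠ v := by
      rintro rfl; exact h1v ⟨_, hb, Sym2.mem_mk_right _ _⟩
    have hcb : c b = c u := by
      have e1 := hc _ _ hab
      have e2 := hc _ _ hva
      omega
    have hN1 := Set.ncard_diff_singleton_add_one hb (Set.toFinite _)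
    have hN2 := Set.ncard_diff_singleton_add_one ha (Set.toFinite _)
    have bound : ∀ N, IsMatching (delTwo G v a) N → N.ncard ≤ n := by
      intro N hN
      obtain ⟨hN, hNv, hNa⟩ := isMatching_delTwo.1 hN
      have := h2.2 _ (isMatching_insert hN hva hNv hNa)
      rw [ncard_insert_edge hNv] at this
      omega
    have m1 : IsMatching (delTwo G v a) (M1 \ {s(a, b)}) :=
      isMatching_delTwo.2 ⟨isMatching_diff h1.1, not_saturates_mono Set.diff_subset h1v,
        not_saturates_diff h1.1 hb (Sym2.mem_mk_left _ _)⟩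
    have m2 : IsMatching (delTwo G v a) (M2 \ {s(v, a)}) :=
      isMatching_delTwo.2 ⟨isMatching_diff h2.1,
        not_saturates_diff h2.1 ha (Sym2.mem_mk_left _ _),
        not_saturates_diff h2.1 ha (Sym2.mem_mk_right _ _)⟩
    have key := ih (delTwo G v a) (fun x y h => hc x y h.1) b hcb _ _
      ⟨m1, fun N hN => (bound N hN).trans (by omega)⟩
      (not_saturates_diff h1.1 hb (Sym2.mem_mk_right _ _))
      ⟨m2, fun N hN => (bound N hN).trans (by omega)⟩ ⟨huw, hne⟩ (by omega)
    rcases key with ⟨M, hM, hMu⟩ | ⟨M, hM, hMb, hMuw⟩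
    · left
      obtain ⟨hm, hMv, hMa⟩ := isMatching_delTwo.1 hM.1
      refine ⟨insert s(v, a) M, ⟨isMatching_insert hm hva hMv hMa, fun N hN => ?_⟩,
        not_saturates_insert hMu huv hua⟩
      rw [ncard_insert_edge hMv]
      have := hM.2 _ m2
      have := h2.2 _ hN
      omega
    · right
      obtain ⟨hm, hMv, hMa⟩ := isMatching_delTwo.1 hM.1
      refine ⟨insert s(a, b) M, ⟨isMatching_insert hm hab hMa hMb, fun N hN => ?_⟩,
        not_saturates_insert hMv hva.ne hbv.symm, Set.mem_insert_of_mem _ hMuw⟩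
      rw [ncard_insert_edge hMa]
      have := hM.2 _ m2
      have := h2.2 _ hN
      omega

/-- Let `G` be a finite bipartite graph, let `v` be a vertex missed by some maximum matching
of `G`, let `w` be adjacent to `v`, and suppose the edge `uw` lies in some maximum matching
of `G`.  Then some maximum matching of `G` does not saturate `u`. -/
theorem exists_maxMatching_missing_u
    {V : Type*} [Fintype V] (G : SimpleGraph V) (hG : G.Colorable 2) (v w u : V)
    (hv : ∃ M1 : Set (Sym2 V), IsMaxMatching G M1 ∧ ¬ Saturates M1 v)
    (hvw : G.Adj v w)
    (hu : ∃ M2 : Set (Sym2 V), IsMaxMatching G M2 ∧ s(u, w) ∈ M2) :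
    ∃ M : Set (Sym2 V), IsMaxMatching G M ∧ ¬ Saturates M u := by
  obtain ⟨C⟩ := hG
  obtain ⟨M1, h1, h1v⟩ := hv
  obtain ⟨M2, h2, huw⟩ := hu
  have huwA : G.Adj u w := h2.1.1 huw
  have hcv : C v = C u := by
    have e1 := C.valid hvw
    have e2 := C.valid huwA
    omega
  by_cases huv : u = v
  · subst huv; exact ⟨M1, h1, h1v⟩
  rcases exchange_aux C u w _ G (fun x y h => C.valid h) v hcv M1 M2 h1 h1v h2 huw rfl with
    h | ⟨M, hM, hMv, hMuw⟩
  · exact h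
  · have hv' : ¬ Saturates (M \ {s(u, w)}) v := not_saturates_mono Set.diff_subset hMv
    refine ⟨insert s(v, w) (M \ {s(u, w)}), ⟨isMatching_insert (isMatching_diff hM.1) hvw hv'
      (not_saturates_diff hM.1 hMuw (Sym2.mem_mk_right _ _)), fun N hN => ?_⟩,
      not_saturates_insert (not_saturates_diff hM.1 hMuw (Sym2.mem_mk_left _ _)) huv huwA.ne⟩
    rw [ncard_insert_edge hv', Set.ncard_diff_singleton_add_one hMuw (Set.toFinite _)]
    exact hM.2 _ hN
end

section
/- Let G5 be the simple graph on the five vertices v, x, w, u, t with edge set {vx, vw, xw, wu, ut}, with the token on v. Then (G5, v) is not an N-position of the game UIR, but (G5, v) is an N-position of the game UIF (a winning first move being: move the token to w and delete u). -/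
variable {V : Type*}

/-- The graph `G5` on the five vertices `v = 0`, `x = 1`, `w = 2`, `u = 3`, `t = 4`, with
edge set `{vx, vw, xw, wu, ut}`: a triangle `v, x, w` with a pendant path `w–u–t`. -/
def G5 : SimpleGraph (Fin 5) :=
  SimpleGraph.fromEdgeSet {s(0, 1), s(0, 2), s(1, 2), s(2, 3), s(3, 4)}

/-- Boolean adjacency of `G5`. -/
def adjB (a b : Fin 5) : Bool :=
  decide ((a, b) ∈ [((0 : Fin 5), (1 : Fin 5)), (1, 0), (0, 2), (2, 0), (1, 2), (2, 1), (2, 3),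
    (3, 2), (3, 4), (4, 3)])

theorem G5_adj_iff (a b : Fin 5) : G5.Adj a b ↔ adjB a b = true := by
  unfold G5
  rw [SimpleGraph.fromEdgeSet_adj]
  simp only [Set.mem_insert_iff, Set.mem_singleton_iff]
  revert a b
  decide

/-- Fuelled evaluation of UIF on `G5`. -/
def uifB : ℕ → Finset (Fin 5) → Fin 5 → Bool
  | 0, _, _ => false
  | n + 1, A, t => decide (∃ w, adjB t w = true ∧ w ∈ A ∧
      ∃ u, adjB w u = true ∧ u ∈ A ∧ uifB n (A.erase u) w = false)

/-- Fuelled evaluation of UIR on `G5`. -/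
def uirB : ℕ → Finset (Fin 5) → Fin 5 → Bool
  | 0, _, _ => false
  | n + 1, A, t => decide (t ∈ A ∧ ∃ w, adjB t w = true ∧ w ∈ A ∧ uirB n (A.erase t) w = false)

theorem uifB_iff (n : ℕ) : ∀ (A : Finset (Fin 5)) (t : Fin 5), A.card ≤ n →
    (uifN G5 A t ↔ uifB n A t = true) := by
  induction n with
  | zero =>
    intro A t h
    have hA : A = ∅ := by simpa using h
    subst hA
    rw [uifN]
    simp [uifB]
  | succ n ih =>
    intro A t h
    have key : ∀ u ∈ A, ∀ w, (¬ uifN G5 (A.erase u) w ↔ uifB n (A.erase u) w = false) := by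
      intro u hu w
      rw [ih _ _ (by rw [Finset.card_erase_of_mem hu]; omega)]
      simp
    rw [uifN]
    simp only [uifB, decide_eq_true_eq, G5_adj_iff]
    constructor
    · rintro ⟨w, hw, u, hu, h1, h2, h3⟩
      exact ⟨w, h1, hw, u, h2, hu, (key u hu w).1 h3⟩
    · rintro ⟨w, h1, hw, u, h2, hu, h3⟩
      exact ⟨w, hw, u, hu, h1, h2, (key u hu w).2 h3⟩

theorem uirB_iff (n : ℕ) : ∀ (A : Finset (Fin 5)) (t : Fin 5), A.card ≤ n →
    (uirN G5 A t ↔ uirB n A t = true) := by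
  induction n with
  | zero =>
    intro A t h
    have hA : A = ∅ := by simpa using h
    subst hA
    rw [uirN]
    simp [uirB]
  | succ n ih =>
    intro A t h
    have key : t ∈ A → ∀ w, (¬ uirN G5 (A.erase t) w ↔ uirB n (A.erase t) w = false) := by
      intro hu w
      rw [ih _ _ (by rw [Finset.card_erase_of_mem hu]; omega)]
      simp
    rw [uirN]
    simp only [uirB, decide_eq_true_eq, G5_adj_iff]
    constructor
    · rintro ⟨ht, w, hw, h1, h3⟩
      exact ⟨ht, w, h1, hw, (key ht w).1 h3⟩
    · rintro ⟨ht, w, h1, hw, h3⟩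
      exact ⟨ht, w, hw, h1, (key ht w).2 h3⟩

/-- With the token on `v = 0`, the position `(G5, v)` is not an N-position of UIR, but it is
an N-position of UIF; a winning first move in UIF is to move the token to `w = 2` and delete
`u = 3`. -/
theorem G5_P_position_uir_N_position_uif :
    ¬ uirN G5 Finset.univ 0 ∧ uifN G5 Finset.univ 0 ∧
      ¬ uifN G5 (Finset.univ.erase 3) 2 := by
  have h3 : ¬ uifN G5 (Finset.univ.erase 3) 2 := by
    rw [uifB_iff 4 _ _ (by decide)]
    decide +kernel
  refine ⟨?_, ?_, h3⟩
  · rw [uirB_iff 5 _ _ (by decide)]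
    decide +kernel
  · rw [uifN]
    refine ⟨2, Finset.mem_univ _, 3, Finset.mem_univ _, ?_, ?_, h3⟩
    · rw [G5_adj_iff]; decide
    · rw [G5_adj_iff]; decide
end
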